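/- arXiv:0906.4152 — 2 statements merged into one kernel-verified Lean document; each statement's English description precedes it below -/
import Mathlib

section
/- Let I_N ⊆ ℚ[u,v,w] be the ideal generated, with h = 3u+2v−w, by g₄₁ = −8u⁴−14u³v−9u²v²−2uv³+2(2u+v)³h−3(2u+v)²h²+2(2u+v)h³, g₄₂ = 8u⁴+4u³v−6u²v²−7uv³−2v⁴−(16u³+14u²v−v³+2uv²)h+6(2u²+uv)h²−4uh³, g₅₁ = (2w−4u−3v)h⁴, g₅₂ = u⁴v, and g₆ = 16u⁶+105u³v³+55u²v⁴+16uv⁵+2v⁶. Then u⁹ ∉ I_N. -/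
open MvPolynomial

/-- The variable `u` in `ℚ[u,v,w]`. -/
noncomputable def u : MvPolynomial (Fin 3) ℚ := X 0
/-- The variable `v` in `ℚ[u,v,w]`. -/
noncomputable def v : MvPolynomial (Fin 3) ℚ := X 1
/-- The variable `w` in `ℚ[u,v,w]`. -/
noncomputable def w : MvPolynomial (Fin 3) ℚ := X 2

/-- `h = 3u + 2v − w`. -/
noncomputable def h : MvPolynomial (Fin 3) ℚ := 3*u + 2*v - w

/-- `g₄₁ = −8u⁴−14u³v−9u²v²−2uv³+2(2u+v)³h−3(2u+v)²h²+2(2u+v)h³`. -/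
noncomputable def g₄₁ : MvPolynomial (Fin 3) ℚ :=
  -8*u^4 - 14*u^3*v - 9*u^2*v^2 - 2*u*v^3
    + 2*(2*u + v)^3*h - 3*(2*u + v)^2*h^2 + 2*(2*u + v)*h^3
/-- `g₄₂ = 8u⁴+4u³v−6u²v²−7uv³−2v⁴−(16u³+14u²v−v³+2uv²)h+6(2u²+uv)h²−4uh³`. -/
noncomputable def g₄₂ : MvPolynomial (Fin 3) ℚ :=
  8*u^4 + 4*u^3*v - 6*u^2*v^2 - 7*u*v^3 - 2*v^4
    - (16*u^3 + 14*u^2*v - v^3 + 2*u*v^2)*h + 6*(2*u^2 + u*v)*h^2 - 4*u*h^3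
/-- `g₅₁ = (2w−4u−3v)h⁴`. -/
noncomputable def g₅₁ : MvPolynomial (Fin 3) ℚ := (2*w - 4*u - 3*v)*h^4
/-- `g₅₂ = u⁴v`. -/
noncomputable def g₅₂ : MvPolynomial (Fin 3) ℚ := u^4*v
/-- `g₆ = 16u⁶+105u³v³+55u²v⁴+16uv⁵+2v⁶`. -/
noncomputable def g₆ : MvPolynomial (Fin 3) ℚ :=
  16*u^6 + 105*u^3*v^3 + 55*u^2*v^4 + 16*u*v^5 + 2*v^6

/-- The ideal `I_N = ⟨g₄₁, g₄₂, g₅₁, g₅₂, g₆⟩` presenting `H^*(N~;ℚ)`, the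
rational cohomology of the variety of complete quadrics on `ℙ³`. -/
noncomputable def I_N : Ideal (MvPolynomial (Fin 3) ℚ) :=
  Ideal.span {g₄₁, g₄₂, g₅₁, g₅₂, g₆}

/-- Table of the values of the functional on `u^a v^b w^(9-a-b)`. -/
def tab : List (List ℤ) :=
  [[6860, 1820, -1160, -1360, 96, 960, 640, 0, 0, 996],
   [1610, 1780, 760, -432, -672, -320, 0, 0, -292],
   [-830, 0, 544, 384, 128, 0, 0, 64],
   [-280, -408, -144, -32, 0, 0, -8],
   [222, 0, 0, 0, 0, 0],
   [60, 0, 0, 0, 0],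
   [10, 0, 0, 0],
   [0, 0, 0],
   [0, 0],
   [1]]

/-- Integer values of the functional on monomials. -/
def L (a b c : ℕ) : ℤ := if a + b + c = 9 then (tab.getD a []).getD b 0 else 0

/-- The monomial. -/
noncomputable def mon (a b c : ℕ) : MvPolynomial (Fin 3) ℚ := u^a * v^b * w^c

/-- Integration functional. -/
noncomputable def phi : MvPolynomial (Fin 3) ℚ →ₗ[ℚ] ℚ :=
  (MvPolynomial.basisMonomials (Fin 3) ℚ).constr ℚ (fun s => ((L (s 0) (s 1) (s 2) : ℤ) : ℚ))

theorem phi_monomial (s : Fin 3 →₀ ℕ) :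
    phi (monomial s 1) = ((L (s 0) (s 1) (s 2) : ℤ) : ℚ) := by
  have := (MvPolynomial.basisMonomials (Fin 3) ℚ).constr_basis ℚ
    (fun s => ((L (s 0) (s 1) (s 2) : ℤ) : ℚ)) s
  simpa [phi] using this

theorem monomial_eq_mon (s : Fin 3 →₀ ℕ) :
    (monomial s 1 : MvPolynomial (Fin 3) ℚ) = mon (s 0) (s 1) (s 2) := by
  rw [MvPolynomial.monomial_eq, Finsupp.prod_fintype _ _ (by simp)]
  simp [Fin.prod_univ_three, mon, u, v, w]

theorem phi_mon (a b c : ℕ) : phi (mon a b c) = (L a b c : ℤ) := by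
  have h1 := monomial_eq_mon (Finsupp.equivFunOnFinite.symm ![a, b, c])
  have h2 := phi_monomial (Finsupp.equivFunOnFinite.symm ![a, b, c])
  simp at h1 h2
  rw [← h1, h2]

/-- Evaluate a sparse polynomial. -/
noncomputable def ev : List (ℤ × ℕ × ℕ × ℕ) → MvPolynomial (Fin 3) ℚ
  | [] => 0
  | t :: l => (t.1 : MvPolynomial (Fin 3) ℚ) * mon t.2.1 t.2.2.1 t.2.2.2 + ev l

/-- Functional on a shifted sparse polynomial. -/
def sh (a b c : ℕ) : List (ℤ × ℕ × ℕ × ℕ) → ℤ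
  | [] => 0
  | t :: l => t.1 * L (a + t.2.1) (b + t.2.2.1) (c + t.2.2.2) + sh a b c l

theorem phi_ev (a b c : ℕ) (l : List (ℤ × ℕ × ℕ × ℕ)) :
    phi (mon a b c * ev l) = (sh a b c l : ℤ) := by
  induction l with
  | nil => simp [ev, sh]
  | cons t l ih =>
    have : mon a b c * ev (t :: l) =
        (t.1 : ℚ) • mon (a + t.2.1) (b + t.2.2.1) (c + t.2.2.2) + mon a b c * ev l := by
      simp only [ev, mon, MvPolynomial.smul_eq_C_mul, map_intCast]
      ring
    rw [this, map_add, map_smul, ih, phi_mon, sh]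
    push_cast
    simp

theorem sh_zero (a b c d : ℕ) (l : List (ℤ × ℕ × ℕ × ℕ))
    (hl : ∀ t ∈ l, t.2.1 + t.2.2.1 + t.2.2.2 = d) (hd : a + b + c + d ≠ 9) :
    sh a b c l = 0 := by
  induction l with
  | nil => rfl
  | cons t l ih =>
    have h1 := hl t (by simp)
    rw [sh, ih (fun t ht => hl t (by simp [ht])), L, if_neg (by omega)]
    simp

theorem key (d : ℕ) (l : List (ℤ × ℕ × ℕ × ℕ))
    (hl : ∀ t ∈ l, t.2.1 + t.2.2.1 + t.2.2.2 = d)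
    (hc : ∀ a < 10 - d, ∀ b < 10 - d, a + b + d ≤ 9 → sh a b (9 - d - a - b) l = 0)
    (q : MvPolynomial (Fin 3) ℚ) : phi (q * ev l) = 0 := by
  induction q using MvPolynomial.induction_on' with
  | monomial s r =>
    have : monomial s r = r • (monomial s 1 : MvPolynomial (Fin 3) ℚ) := by
      simp [MvPolynomial.smul_monomial]
    rw [this, smul_mul_assoc, map_smul, monomial_eq_mon, phi_ev]
    have : sh (s 0) (s 1) (s 2) l = 0 := by
      by_cases hd : s 0 + s 1 + s 2 + d = 9
      · have := hc (s 0) (by omega) (s 1) (by omega) (by omega)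
        rwa [show 9 - d - s 0 - s 1 = s 2 by omega] at this
      · exact sh_zero _ _ _ _ _ hl hd
    simp [this]
  | add p q hp hq => rw [add_mul, map_add, hp, hq, add_zero]

/-- Coefficients. -/
def l41 : List (ℤ × ℕ × ℕ × ℕ) :=
  [(40, 4, 0, 0), (108, 3, 1, 0), (108, 2, 2, 0), (48, 1, 3, 0), (-52, 3, 0, 1), (-102, 2, 1, 1), (-66, 1, 2, 1), (8, 0, 4, 0), (-14, 0, 3, 1), (24, 2, 0, 2), (30, 1, 1, 2), (9, 0, 2, 2), (-4, 1, 0, 3), (-2, 0, 1, 3)]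

theorem e41 (q : MvPolynomial (Fin 3) ℚ) : phi (q * g₄₁) = 0 := by
  have : g₄₁ = ev l41 := by
    simp only [g₄₁, h, ev, l41, mon]
    push_cast
    ring
  rw [this]
  exact key 4 l41 (by decide +kernel) (by decide +kernel) q

/-- Coefficients. -/
def l42 : List (ℤ × ℕ × ℕ × ℕ) :=
  [(-40, 4, 0, 0), (-88, 3, 1, 0), (-64, 2, 2, 0), (-16, 1, 3, 0), (52, 3, 0, 1), (74, 2, 1, 1), (-1, 0, 3, 1), (26, 1, 2, 1), (-24, 2, 0, 2), (-18, 1, 1, 2), (4, 1, 0, 3)]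

theorem e42 (q : MvPolynomial (Fin 3) ℚ) : phi (q * g₄₂) = 0 := by
  have : g₄₂ = ev l42 := by
    simp only [g₄₂, h, ev, l42, mon]
    push_cast
    ring
  rw [this]
  exact key 4 l42 (by decide +kernel) (by decide +kernel) q

/-- Coefficients. -/
def l51 : List (ℤ × ℕ × ℕ × ℕ) :=
  [(594, 4, 0, 1), (1620, 3, 1, 1), (-432, 3, 0, 2), (1656, 2, 2, 1), (-882, 2, 1, 2), (156, 2, 0, 3), (752, 1, 3, 1), (-600, 1, 2, 2), (212, 1, 1, 3), (-28, 1, 0, 4), (128, 0, 4, 1), (-136, 0, 3, 2), (72, 0, 2, 3), (-19, 0, 1, 4), (2, 0, 0, 5), (-324, 5, 0, 0), (-1107, 4, 1, 0), (-1512, 3, 2, 0), (-1032, 2, 3, 0), (-352, 1, 4, 0), (-48, 0, 5, 0)]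

theorem e51 (q : MvPolynomial (Fin 3) ℚ) : phi (q * g₅₁) = 0 := by
  have : g₅₁ = ev l51 := by
    simp only [g₅₁, h, ev, l51, mon]
    push_cast
    ring
  rw [this]
  exact key 5 l51 (by decide +kernel) (by decide +kernel) q

/-- Coefficients. -/
def l52 : List (ℤ × ℕ × ℕ × ℕ) :=
  [(1, 4, 1, 0)]

theorem e52 (q : MvPolynomial (Fin 3) ℚ) : phi (q * g₅₂) = 0 := by
  have : g₅₂ = ev l52 := by
    simp only [g₅₂, h, ev, l52, mon]
    push_cast
    ring
  rw [this]
  exact key 5 l52 (by decide +kernel) (by decide +kernel) q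

/-- Coefficients. -/
def l6 : List (ℤ × ℕ × ℕ × ℕ) :=
  [(16, 6, 0, 0), (105, 3, 3, 0), (55, 2, 4, 0), (16, 1, 5, 0), (2, 0, 6, 0)]

theorem e6 (q : MvPolynomial (Fin 3) ℚ) : phi (q * g₆) = 0 := by
  have : g₆ = ev l6 := by
    simp only [g₆, h, ev, l6, mon]
    push_cast
    ring
  rw [this]
  exact key 6 l6 (by decide +kernel) (by decide +kernel) q

/-- `u⁹ ∉ I_N`: the top characteristic `∫ u⁹ = 1` is nonzero. -/
theorem u9_not_mem : u^9 ∉ I_N := by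
  intro hmem
  have hz : ∀ x ∈ I_N, ∀ q, phi (q * x) = 0 := by
    intro x hx
    refine Submodule.span_induction (p := fun x _ => ∀ q, phi (q * x) = 0) ?_ ?_ ?_ ?_ hx
    · intro y hy q
      simp only [Set.mem_insert_iff, Set.mem_singleton_iff] at hy
      rcases hy with rfl | rfl | rfl | rfl | rfl
      · exact e41 q
      · exact e42 q
      · exact e51 q
      · exact e52 q
      · exact e6 q
    · simp
    · intro x y _ _ hx hy q
      rw [mul_add, map_add, hx, hy, add_zero]
    · intro a x _ hx q
      rw [smul_eq_mul, ← mul_assoc]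
      exact hx _
  have h1 := hz _ hmem 1
  have h2 := phi_mon 9 0 0
  have h3 : L 9 0 0 = 1 := by decide
  simp only [mon, pow_zero, mul_one] at h2
  rw [one_mul, h2, h3] at h1
  norm_num at h1
end

section
/- Let I_N ⊆ ℚ[u,v,w] be the ideal generated, with h = 3u+2v−w, by g₄₁ = −8u⁴−14u³v−9u²v²−2uv³+2(2u+v)³h−3(2u+v)²h²+2(2u+v)h³, g₄₂ = 8u⁴+4u³v−6u²v²−7uv³−2v⁴−(16u³+14u²v−v³+2uv²)h+6(2u²+uv)h²−4uh³, g₅₁ = (2w−4u−3v)h⁴, g₅₂ = u⁴v, and g₆ = 16u⁶+105u³v³+55u²v⁴+16uv⁵+2v⁶. Then every degree-9 monomial u^r v^s w^t with t = 1 or t = 2 belongs to I_N, and moreover the monomials u⁸v, u⁷v², u⁶v³, u⁵v⁴, u⁴v⁵, u⁵vw³, u⁴v²w³, u⁴vw⁴, and u²vw⁶ belong to I_N. -/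
open MvPolynomial

lemma mem_of_comb (N : ℚ) (hN : N ≠ 0) (m a b c d e : MvPolynomial (Fin 3) ℚ)
    (H : C N * m = a*g₄₁ + b*g₄₂ + c*g₅₁ + d*g₅₂ + e*g₆) : m ∈ I_N := by
  have hs : ∀ x ∈ ({g₄₁, g₄₂, g₅₁, g₅₂, g₆} : Set (MvPolynomial (Fin 3) ℚ)), x ∈ I_N :=
    fun x hx => Ideal.subset_span hx
  have h1 : C N * m ∈ I_N := by
    rw [H]
    refine add_mem (add_mem (add_mem (add_mem ?_ ?_) ?_) ?_) ?_ <;>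
      exact Ideal.mul_mem_left _ _ (hs _ (by simp))
  have h2 : m = C N⁻¹ * (C N * m) := by
    rw [← mul_assoc, ← C_mul, inv_mul_cancel₀ hN, C_1, one_mul]
  rw [h2]
  exact Ideal.mul_mem_left _ _ h1

lemma mem_of_u4v (m : MvPolynomial (Fin 3) ℚ) (H : u^4*v ∣ m) : m ∈ I_N := by
  obtain ⟨d, rfl⟩ := H
  exact Ideal.mul_mem_right _ _ (Ideal.subset_span (by simp [g₅₂]))

lemma mem_8_0_1 : u^8 * v^0 * w^1 ∈ I_N := by
  refine mem_of_comb 16 (by norm_num) _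
    (4*u^3*v^2)
    (2*u^2*v^3 + 12*u^3*v^2)
    (0)
    (-32*v*w^3 + 144*v^2*w^2 + 192*u*v*w^2 - 251*v^3*w - 689*u*v^2*w - 416*u^2*v*w + 512*u*v^3 + 704*u^2*v^2 + 320*u^3*v + 128*v^4)
    (u^2*w) ?_
  have hC : (C (16 : ℚ) : MvPolynomial (Fin 3) ℚ) = 16 := map_ofNat C 16
  rw [hC]
  simp only [g₄₁, g₄₂, g₅₁, g₅₂, g₆, h]
  generalize u = u
  generalize v = v
  generalize w = w
  ring

lemma mem_3_5_1 : u^3 * v^5 * w^1 ∈ I_N := by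
  refine mem_of_comb 1 (by norm_num) _
    (0)
    (-u^3*v^2)
    (0)
    (4*v*w^3 - 18*v^2*w^2 - 24*u*v*w^2 + 26*v^3*w + 74*u*v^2*w + 52*u^2*v*w - 16*v^4 - 64*u*v^3 - 88*u^2*v^2 - 40*u^3*v)
    (0) ?_
  have hC : (C (1 : ℚ) : MvPolynomial (Fin 3) ℚ) = 1 := map_one C
  rw [hC]
  simp only [g₄₁, g₄₂, g₅₁, g₅₂, g₆, h]
  generalize u = u
  generalize v = v
  generalize w = w
  ring

lemma mem_2_6_1 : u^2 * v^6 * w^1 ∈ I_N := by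
  refine mem_of_comb 1 (by norm_num) _
    (-2*u^3*v^2)
    (2*u^3*v^2 - u^2*v^3)
    (0)
    (-110*v^3*w - 300*u*v^2*w - 16*v*w^3 + 72*v^2*w^2 + 96*u*v*w^2 - 208*u^2*v*w + 64*v^4 + 256*u*v^3 + 352*u^2*v^2 + 160*u^3*v)
    (0) ?_
  have hC : (C (1 : ℚ) : MvPolynomial (Fin 3) ℚ) = 1 := map_one C
  rw [hC]
  simp only [g₄₁, g₄₂, g₅₁, g₅₂, g₆, h]
  generalize u = u
  generalize v = v
  generalize w = w
  ring

lemma mem_1_7_1 : u^1 * v^7 * w^1 ∈ I_N := by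
  refine mem_of_comb 2 (by norm_num) _
    (32*u^3*v^2)
    (23*u^3*v^2 + 16*u^2*v^3)
    (0)
    (225*v^3*w + 730*u*v^2*w - 16*u^3*w + 36*v*w^3 - 162*v^2*w^2 - 216*u*v*w^2 + 468*u^2*v*w - 144*v^4 - 576*u*v^3 - 792*u^2*v^2 - 360*u^3*v)
    (u*v*w) ?_
  have hC : (C (2 : ℚ) : MvPolynomial (Fin 3) ℚ) = 2 := map_ofNat C 2
  rw [hC]
  simp only [g₄₁, g₄₂, g₅₁, g₅₂, g₆, h]
  generalize u = u
  generalize v = v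
  generalize w = w
  ring

lemma mem_0_8_1 : u^0 * v^8 * w^1 ∈ I_N := by
  refine mem_of_comb 2 (by norm_num) _
    (-146*u^3*v^2)
    (-189*u^3*v^2 - 73*u^2*v^3)
    (0)
    (1520*v^3*w + 2890*u*v^2*w + 128*u^3*w + 2220*u^2*v*w + 172*v*w^3 - 774*v^2*w^2 - 1032*u*v*w^2 - 688*v^4 - 2752*u*v^3 - 3784*u^2*v^2 - 1720*u^3*v)
    (v^2*w - 8*u*v*w) ?_
  have hC : (C (2 : ℚ) : MvPolynomial (Fin 3) ℚ) = 2 := map_ofNat C 2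
  rw [hC]
  simp only [g₄₁, g₄₂, g₅₁, g₅₂, g₆, h]
  generalize u = u
  generalize v = v
  generalize w = w
  ring

lemma mem_7_0_2 : u^7 * v^0 * w^2 ∈ I_N := by
  refine mem_of_comb 16 (by norm_num) _
    (4*u^2*v^2*w + 16*u^3*v*w)
    (2*u*v^3*w + 12*u^2*v^2*w + 27*u^3*v*w)
    (0)
    (-44*w^4 + 198*v*w^3 - 335*v^2*w^2 - 782*u*v*w^2 + 704*u*v^2*w + 968*u^2*v*w + 264*u*w^3 - 572*u^2*w^2 + 440*u^3*w + 176*v^3*w)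
    (u*w^2) ?_
  have hC : (C (16 : ℚ) : MvPolynomial (Fin 3) ℚ) = 16 := map_ofNat C 16
  rw [hC]
  simp only [g₄₁, g₄₂, g₅₁, g₅₂, g₆, h]
  generalize u = u
  generalize v = v
  generalize w = w
  ring

lemma mem_3_4_2 : u^3 * v^4 * w^2 ∈ I_N := by
  refine mem_of_comb 1 (by norm_num) _
    (0)
    (-u^3*v*w)
    (0)
    (4*w^4 - 18*v*w^3 - 24*u*w^3 + 26*v^2*w^2 + 74*u*v*w^2 + 52*u^2*w^2 - 16*v^3*w - 64*u*v^2*w - 88*u^2*v*w - 40*u^3*w)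
    (0) ?_
  have hC : (C (1 : ℚ) : MvPolynomial (Fin 3) ℚ) = 1 := map_one C
  rw [hC]
  simp only [g₄₁, g₄₂, g₅₁, g₅₂, g₆, h]
  generalize u = u
  generalize v = v
  generalize w = w
  ring

lemma mem_2_5_2 : u^2 * v^5 * w^2 ∈ I_N := by
  refine mem_of_comb 1 (by norm_num) _
    (-2*u^3*v*w)
    (-u^2*v^2*w + 2*u^3*v*w)
    (0)
    (-16*w^4 + 72*v*w^3 - 110*v^2*w^2 - 300*u*v*w^2 + 64*v^3*w + 256*u*v^2*w + 352*u^2*v*w + 96*u*w^3 - 208*u^2*w^2 + 160*u^3*w)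
    (0) ?_
  have hC : (C (1 : ℚ) : MvPolynomial (Fin 3) ℚ) = 1 := map_one C
  rw [hC]
  simp only [g₄₁, g₄₂, g₅₁, g₅₂, g₆, h]
  generalize u = u
  generalize v = v
  generalize w = w
  ring

lemma mem_1_6_2 : u^1 * v^6 * w^2 ∈ I_N := by
  refine mem_of_comb 1 (by norm_num) _
    (8*u^3*v*w - 2*u^2*v^2*w)
    (2*u^2*v^2*w - 2*u^3*v*w - u*v^3*w)
    (0)
    (280*v^2*w^2 + 40*w^4 - 180*v*w^3 + 756*u*v*w^2 - 160*v^3*w - 640*u*v^2*w - 880*u^2*v*w - 240*u*w^3 + 520*u^2*w^2 - 400*u^3*w)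
    (0) ?_
  have hC : (C (1 : ℚ) : MvPolynomial (Fin 3) ℚ) = 1 := map_one C
  rw [hC]
  simp only [g₄₁, g₄₂, g₅₁, g₅₂, g₆, h]
  generalize u = u
  generalize v = v
  generalize w = w
  ring

lemma mem_0_7_2 : u^0 * v^7 * w^2 ∈ I_N := by
  refine mem_of_comb 2 (by norm_num) _
    (-18*u^3*v*w + 32*u^2*v^2*w)
    (23*u^2*v^2*w + 27*u^3*v*w + 16*u*v^3*w)
    (0)
    (-1160*v^2*w^2 - 2356*u^2*w^2 - 180*w^4 + 810*v*w^3 - 3366*u*v*w^2 + 720*v^3*w + 2880*u*v^2*w + 3960*u^2*v*w + 1080*u*w^3 + 1800*u^3*w)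
    (v*w^2) ?_
  have hC : (C (2 : ℚ) : MvPolynomial (Fin 3) ℚ) = 2 := map_ofNat C 2
  rw [hC]
  simp only [g₄₁, g₄₂, g₅₁, g₅₂, g₆, h]
  generalize u = u
  generalize v = v
  generalize w = w
  ring

lemma mem_2_1_6 : u^2 * v^1 * w^6 ∈ I_N := by
  refine mem_of_comb 16 (by norm_num) _
    (-8*u^2*w^3 - 36*u^2*v*w^2 + 24*u^3*w^2 - 2090*u^3*v*w + 4582*u^3*v^2 - 102*u^2*v^2*w - 239*u^2*v^3)
    (-8*u^2*w^3 + 24*u^3*w^2 - 3302*u^3*v*w + 11966*u^3*v^2 - 1011*u^2*v^2*w + 2530*u^2*v^3)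
    (0)
    (-50448*v*w^3 + 159826*v^2*w^2 + 258484*u*v*w^2 - 226502*v^3*w - 625668*u*v^2*w - 485184*u^2*v*w + 106672*v^4 + 419040*u*v^3 + 668912*u^2*v^2 + 295360*u^3*v - 30128*u*w^3 + 63984*u^2*w^2 - 48480*u^3*w - 15296*u^4 + 5200*w^4)
    (956*u^2*v) ?_
  have hC : (C (16 : ℚ) : MvPolynomial (Fin 3) ℚ) = 16 := map_ofNat C 16
  rw [hC]
  simp only [g₄₁, g₄₂, g₅₁, g₅₂, g₆, h]
  generalize u = u
  generalize v = v
  generalize w = w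
  ring

/-- Every degree-9 monomial `u^r v^s w^t` with `t = 1` or `t = 2` lies in `I_N`,
as do the further listed monomials with vanishing characteristic number. -/
theorem vanishing_characteristics_N :
    (∀ r s t : ℕ, r + s + t = 9 → (t = 1 ∨ t = 2) → u^r * v^s * w^t ∈ I_N) ∧
    u^8*v ∈ I_N ∧ u^7*v^2 ∈ I_N ∧ u^6*v^3 ∈ I_N ∧ u^5*v^4 ∈ I_N ∧
    u^4*v^5 ∈ I_N ∧ u^5*v*w^3 ∈ I_N ∧ u^4*v^2*w^3 ∈ I_N ∧ u^4*v*w^4 ∈ I_N ∧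
    u^2*v*w^6 ∈ I_N := by
  have D : ∀ r s t : ℕ, u^4*v ∣ u^(r+4) * v^(s+1) * w^t :=
    fun r s t => ⟨u^r * v^s * w^t, by ring⟩
  refine ⟨?_, ?_⟩
  · intro r s t hr ht
    by_cases hd : 4 ≤ r ∧ 1 ≤ s
    · obtain ⟨r, rfl⟩ := Nat.exists_eq_add_of_le' hd.1
      obtain ⟨s, rfl⟩ := Nat.exists_eq_add_of_le' hd.2
      exact mem_of_u4v _ (D r s t)
    · rcases ht with rfl | rfl
      · obtain rfl : s = 8 - r := by omega
        have hr8 : r ≤ 8 := by omega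
        clear hr
        interval_cases r
        · exact mem_0_8_1
        · exact mem_1_7_1
        · exact mem_2_6_1
        · exact mem_3_5_1
        · exact absurd (by decide) hd
        · exact absurd (by decide) hd
        · exact absurd (by decide) hd
        · exact absurd (by decide) hd
        · exact mem_8_0_1
      · obtain rfl : s = 7 - r := by omega
        have hr7 : r ≤ 7 := by omega
        clear hr
        interval_cases r
        · exact mem_0_7_2
        · exact mem_1_6_2
        · exact mem_2_5_2
        · exact mem_3_4_2
        · exact absurd (by decide) hd
        · exact absurd (by decide) hd
        · exact absurd (by decide) hd
        · exact mem_7_0_2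
  · refine ⟨?_, ?_, ?_, ?_, ?_, ?_, ?_, ?_, ?_⟩
    · exact mem_of_u4v _ ⟨u^4, by ring⟩
    · exact mem_of_u4v _ ⟨u^3*v, by ring⟩
    · exact mem_of_u4v _ ⟨u^2*v^2, by ring⟩
    · exact mem_of_u4v _ ⟨u*v^3, by ring⟩
    · exact mem_of_u4v _ ⟨v^4, by ring⟩
    · exact mem_of_u4v _ ⟨u*w^3, by ring⟩
    · exact mem_of_u4v _ ⟨v*w^3, by ring⟩
    · exact mem_of_u4v _ ⟨w^4, by ring⟩
    · simpa only [pow_one] using mem_2_1_6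
end
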